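/- arXiv:1002.1869 — 2 statements merged into one kernel-verified Lean document; each statement's English description precedes it below -/
import Mathlib

section
/- Let S be a commutative, cancellative, torsion-free monoid and R a commutative ring with identity. Then R is an integral domain if and only if the semigroup ring R[S] is an integral domain. -/
/-!
If some sum `s + t` of an exponent of `f` and an exponent of `g` arises in only one way, then the
coefficient of `f * g` at `s + t` is a single product of nonzero coefficients. Such a sum always
exists in a `ℚ`-vector space, since one can be ordered compatibly with addition. A cancellative
monoid embeds into its Grothendieck group, which inherits torsion-freeness and hence embeds into
its divisible hull, a `ℚ`-vector space.
-/

open Algebra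

section UniqueSums

variable (S : Type*) [AddCommMonoid S] [IsCancelAdd S] [IsAddTorsionFree S]

theorem exists_injective_addMonoidHom_divisibleHull_grothendieckAddGroup :
    ∃ f : S →+ DivisibleHull (GrothendieckAddGroup S), Function.Injective f :=
  ⟨(DivisibleHull.coeAddMonoidHom _).comp GrothendieckAddGroup.of,
    DivisibleHull.coe_injective.comp GrothendieckAddGroup.of_injective⟩

theorem twoUniqueSums_of_isCancelAdd_of_isAddTorsionFree : TwoUniqueSums S := by
  obtain ⟨f, hf⟩ := exists_injective_addMonoidHom_divisibleHull_grothendieckAddGroup S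
  exact .of_injective_addHom f.toAddHom hf inferInstance

end UniqueSums

theorem isDomain_of_isDomain_addMonoidAlgebra (R S : Type*) [Semiring R] [AddMonoid S]
    [IsDomain (AddMonoidAlgebra R S)] : IsDomain R :=
  Function.Injective.isDomain (AddMonoidAlgebra.singleZeroRingHom (R := R) (M := S))
    AddMonoidAlgebra.single_right_injective

theorem isDomain_iff_isDomain_addMonoidAlgebra_general {R S : Type*} [Semiring R] [IsCancelAdd R]
    [AddMonoid S] [UniqueSums S] : IsDomain R ↔ IsDomain (AddMonoidAlgebra R S) :=
  ⟨fun _ => inferInstance, fun _ => isDomain_of_isDomain_addMonoidAlgebra R S⟩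

/-- For `S` a commutative, cancellative, torsion-free monoid, `R` is an integral domain iff the
semigroup ring `R[S]` is an integral domain. -/
theorem isDomain_iff_isDomain_addMonoidAlgebra {R S : Type*} [CommRing R] [AddCommMonoid S]
    (hcan : ∀ s t u : S, s + t = s + u → t = u)
    (htf : ∀ (n : ℕ) (s t : S), 1 ≤ n → n • s = n • t → s = t) :
    IsDomain R ↔ IsDomain (AddMonoidAlgebra R S) := by
  have : IsLeftCancelAdd S := ⟨hcan⟩
  have : IsCancelAdd S := AddCommMagma.IsLeftCancelAdd.toIsCancelAdd S
  have : IsAddTorsionFree S := ⟨fun n hn s t => htf n s t (Nat.one_le_iff_ne_zero.mpr hn)⟩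
  have : TwoUniqueSums S := twoUniqueSums_of_isCancelAdd_of_isAddTorsionFree S
  exact isDomain_iff_isDomain_addMonoidAlgebra_general
end

section
/- Let R be a commutative ring with identity and M an R-module. If M has very few zero-divisors (Z_R(M) is a finite union of associated primes of M), then M has Property (A): every finitely generated ideal I of R with I ⊆ Z_R(M) has a nonzero annihilator in M. -/
theorem exists_le_of_subset_iUnion_of_isPrime {R ι : Type*} [CommRing R] [Finite ι]
    {I : Ideal R} {p : ι → Ideal R} (hp : ∀ i, (p i).IsPrime)
    (hI : (I : Set R) ⊆ ⋃ i, (p i : Set R)) : ∃ i, I ≤ p i := by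
  obtain ⟨i₀, -⟩ := Set.mem_iUnion.1 (hI I.zero_mem)
  simpa only [Set.mem_univ, true_and] using
    (Ideal.subset_union_prime_finite Set.finite_univ i₀ i₀ fun i _ _ _ ↦ hp i).1
      (by rwa [Set.biUnion_univ])

-- `IsAssociatedPrime` only asks `p` to be the radical of an annihilator, which is weaker than
-- being the annihilator `Ideal.torsionOf R M m` itself.
theorem propertyA_of_very_few_zeroDivisors_general {R M ι : Type*} [CommRing R] [AddCommMonoid M]
    [Module R M] [Finite ι] {p : ι → Ideal R} (hprime : ∀ i, (p i).IsPrime)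
    (hass : ∀ i, ∃ m : M, p i = Ideal.torsionOf R M m)
    {I : Ideal R} (hI : (I : Set R) ⊆ ⋃ i, (p i : Set R)) :
    ∃ x : M, x ≠ 0 ∧ ∀ r ∈ I, r • x = 0 := by
  obtain ⟨i, hIp⟩ := exists_le_of_subset_iUnion_of_isPrime hprime hI
  obtain ⟨m, hm⟩ := hass i
  have hm₀ : m ≠ 0 := fun h ↦
    (hprime i).ne_top (hm.trans ((Ideal.torsionOf_eq_top_iff R m).2 h))
  exact ⟨m, hm₀, fun r hr ↦ (Ideal.mem_torsionOf_iff m r).1 (hm ▸ hIp hr)⟩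

/-- If the `R`-module `M` has very few zero-divisors (`Z_R(M)` is a finite union of associated
primes of `M`), then `M` has Property (A): every finitely generated ideal contained in `Z_R(M)`
has a nonzero annihilator in `M`. -/
theorem propertyA_of_very_few_zeroDivisors {R M : Type*} [CommRing R] [AddCommGroup M] [Module R M]
    (n : ℕ) (p : Fin n → Ideal R)
    (hprime : ∀ i, (p i).IsPrime)
    (hass : ∀ i, ∃ m : M, ∀ r : R, r ∈ p i ↔ r • m = 0)
    (hZ : {r : R | ∃ x : M, x ≠ 0 ∧ r • x = 0} = ⋃ i, (p i : Set R)) :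
    ∀ I : Ideal R, I.FG → (I : Set R) ⊆ {r : R | ∃ x : M, x ≠ 0 ∧ r • x = 0} →
        ∃ x : M, x ≠ 0 ∧ ∀ r ∈ I, r • x = 0 :=
  fun _ _ hI ↦ propertyA_of_very_few_zeroDivisors_general hprime
    (fun i ↦ (hass i).imp fun _ hm ↦ Ideal.ext hm) (hI.trans_eq hZ)
end
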